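/- arXiv:2102.04338 — 6 statements merged into one kernel-verified Lean document; each statement's English description precedes it below -/
import Mathlib

section
/- Assume the width condition min(d_0, d_1, …, d_{H+1}) = min(d_0, d_{H+1}) =: k. If (W_1, …, W_{H+1}) is a critical point of L such that rank(W_{H+1} W_H ⋯ W_1) = k, then it is a global minimum of L, i.e., L(W_1, …, W_{H+1}) ≤ L(V_1, …, V_{H+1}) for every tuple (V_1, …, V_{H+1}) with V_i ∈ ℝ^{d_i × d_{i−1}}. -/
attribute [local instance] Matrix.frobeniusNormedAddCommGroup Matrix.frobeniusNormedSpace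

/-- The chained product `W_{j} ⋯ W_1` of the first `j` weight matrices. -/
noncomputable def netProdUpTo {H : ℕ} {d : Fin (H + 2) → ℕ}
    (W : ∀ i : Fin (H + 1), Matrix (Fin (d i.succ)) (Fin (d i.castSucc)) ℝ)
    (j : Fin (H + 2)) : Matrix (Fin (d j)) (Fin (d 0)) ℝ :=
  Fin.induction (motive := fun j => Matrix (Fin (d j)) (Fin (d 0)) ℝ)
    1 (fun i acc => W i * acc) j

/-- The full chained product `W_{H+1} W_H ⋯ W_1`. -/
noncomputable def netProd {H : ℕ} {d : Fin (H + 2) → ℕ}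
    (W : ∀ i : Fin (H + 1), Matrix (Fin (d i.succ)) (Fin (d i.castSucc)) ℝ) :
    Matrix (Fin (d (Fin.last (H + 1)))) (Fin (d 0)) ℝ :=
  netProdUpTo W (Fin.last (H + 1))

/-- The squared-error loss `L(W) = ½‖W_{H+1}⋯W_1 X − Y‖_F²`. -/
noncomputable def netLoss {H m : ℕ} {d : Fin (H + 2) → ℕ}
    (X : Matrix (Fin (d 0)) (Fin m) ℝ)
    (Y : Matrix (Fin (d (Fin.last (H + 1)))) (Fin m) ℝ)
    (W : ∀ i : Fin (H + 1), Matrix (Fin (d i.succ)) (Fin (d i.castSucc)) ℝ) : ℝ :=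
  (1 / 2) * ∑ a, ∑ b, ((netProd W * X - Y) a b) ^ 2

lemma net_entry_diff {H : ℕ} {d : Fin (H + 2) → ℕ} (i : Fin (H + 1))
    (a : Fin (d i.succ)) (b : Fin (d i.castSucc)) :
    Differentiable ℝ (fun W : (∀ i : Fin (H + 1),
      Matrix (Fin (d i.succ)) (Fin (d i.castSucc)) ℝ) => W i a b) := by
  let f : (∀ i : Fin (H + 1), Matrix (Fin (d i.succ)) (Fin (d i.castSucc)) ℝ) →ₗ[ℝ] ℝ :=
    { toFun := fun W => W i a b
      map_add' := fun _ _ => rfl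
      map_smul' := fun _ _ => rfl }
  exact (LinearMap.toContinuousLinearMap f).differentiable

lemma netProdUpTo_succ {H : ℕ} {d : Fin (H + 2) → ℕ}
    (W : ∀ i : Fin (H + 1), Matrix (Fin (d i.succ)) (Fin (d i.castSucc)) ℝ)
    (i : Fin (H + 1)) : netProdUpTo W i.succ = W i * netProdUpTo W i.castSucc := by
  simp [netProdUpTo]

lemma netProdUpTo_diff {H : ℕ} {d : Fin (H + 2) → ℕ} (j : Fin (H + 2)) :
    ∀ (a : Fin (d j)) (b : Fin (d 0)),
    Differentiable ℝ (fun W : (∀ i : Fin (H + 1),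
      Matrix (Fin (d i.succ)) (Fin (d i.castSucc)) ℝ) => netProdUpTo W j a b) := by
  induction j using Fin.induction with
  | zero => intro a b; simp [netProdUpTo]
  | succ i ih =>
    intro a b
    simp only [netProdUpTo_succ, Matrix.mul_apply]
    exact Differentiable.fun_sum fun c _ => (net_entry_diff i a c).fun_mul (ih c b)

lemma netLoss_diff {H m : ℕ} {d : Fin (H + 2) → ℕ}
    (X : Matrix (Fin (d 0)) (Fin m) ℝ)
    (Y : Matrix (Fin (d (Fin.last (H + 1)))) (Fin m) ℝ) :
    Differentiable ℝ (netLoss (H := H) (d := d) X Y) := by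
  unfold netLoss netProd
  refine Differentiable.const_mul ?_ _
  refine Differentiable.fun_sum fun a _ => Differentiable.fun_sum fun b _ => ?_
  refine Differentiable.fun_pow ?_ 2
  simp only [Matrix.sub_apply, Matrix.mul_apply]
  refine Differentiable.sub_const ?_ _
  exact Differentiable.fun_sum fun c _ => (netProdUpTo_diff _ a c).mul_const _

lemma net_crit {H m : ℕ} {d : Fin (H + 2) → ℕ}
    (X : Matrix (Fin (d 0)) (Fin m) ℝ)
    (Y : Matrix (Fin (d (Fin.last (H + 1)))) (Fin m) ℝ)
    (W D : ∀ i : Fin (H + 1), Matrix (Fin (d i.succ)) (Fin (d i.castSucc)) ℝ)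
    (hcrit : fderiv ℝ (netLoss X Y) W = 0)
    (Δ : Matrix (Fin (d (Fin.last (H + 1)))) (Fin (d 0)) ℝ)
    (h : ∀ t : ℝ, netProd (W + t • D) = netProd W + t • Δ) :
    ∑ a, ∑ b, (netProd W * X - Y) a b * (Δ * X) a b = 0 := by
  have h1 : HasDerivAt (fun t : ℝ => netLoss X Y (W + t • D)) 0 0 := by
    have hl : HasDerivAt (fun t : ℝ => W + t • D) D 0 := by
      exact (((hasDerivAt_id (0 : ℝ)).smul_const D).const_add W).congr_deriv (one_smul ℝ D)
    have hf : HasFDerivAt (netLoss X Y) (fderiv ℝ (netLoss X Y) W) (W + (0 : ℝ) • D) := by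
      rw [zero_smul, add_zero]
      exact (netLoss_diff X Y W).hasFDerivAt
    have := hf.comp_hasDerivAt (0 : ℝ) hl
    rw [hcrit] at this
    exact this
  have h2 : HasDerivAt (fun t : ℝ => netLoss X Y (W + t • D))
      (∑ a, ∑ b, (netProd W * X - Y) a b * (Δ * X) a b) 0 := by
    have e : (fun t : ℝ => netLoss X Y (W + t • D)) = fun t : ℝ =>
        (1 / 2) * ∑ a, ∑ b, ((netProd W * X - Y) a b + t * (Δ * X) a b) ^ 2 := by
      funext t
      unfold netLoss
      rw [h t, Matrix.add_mul, Matrix.smul_mul]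
      congr 1
      refine Finset.sum_congr rfl fun a _ => Finset.sum_congr rfl fun b _ => ?_
      simp only [Matrix.sub_apply, Matrix.add_apply, Matrix.smul_apply, smul_eq_mul]
      ring
    rw [e]
    have h3 : HasDerivAt (fun t : ℝ =>
        ∑ a, ∑ b, ((netProd W * X - Y) a b + t * (Δ * X) a b) ^ 2)
        (∑ a, ∑ b, 2 * ((netProd W * X - Y) a b * (Δ * X) a b)) 0 := by
      refine HasDerivAt.fun_sum fun a _ => HasDerivAt.fun_sum fun b _ => ?_
      have := (((hasDerivAt_id (0 : ℝ)).mul_const ((Δ * X) a b)).const_add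
        ((netProd W * X - Y) a b)).pow 2
      refine this.congr_deriv ?_
      simp
      ring
    refine (h3.const_mul (1 / 2)).congr_deriv ?_
    simp only [← Finset.mul_sum]
    ring
  exact h2.unique h1

lemma net_min {H m : ℕ} {d : Fin (H + 2) → ℕ}
    (X : Matrix (Fin (d 0)) (Fin m) ℝ)
    (Y : Matrix (Fin (d (Fin.last (H + 1)))) (Fin m) ℝ)
    (W V : ∀ i : Fin (H + 1), Matrix (Fin (d i.succ)) (Fin (d i.castSucc)) ℝ)
    (h : ∑ a, ∑ b, (netProd W * X - Y) a b * ((netProd V - netProd W) * X) a b = 0) :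
    netLoss X Y W ≤ netLoss X Y V := by
  have key : ∑ a, ∑ b, ((netProd W * X - Y) a b) ^ 2 +
      2 * ∑ a, ∑ b, (netProd W * X - Y) a b * ((netProd V - netProd W) * X) a b
      ≤ ∑ a, ∑ b, ((netProd V * X - Y) a b) ^ 2 := by
    rw [Finset.mul_sum, ← Finset.sum_add_distrib]
    refine Finset.sum_le_sum fun a _ => ?_
    rw [Finset.mul_sum, ← Finset.sum_add_distrib]
    refine Finset.sum_le_sum fun b _ => ?_
    rw [Matrix.sub_mul]
    simp only [Matrix.sub_apply]
    nlinarith [sq_nonneg ((netProd V * X) a b - (netProd W * X) a b)]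
  unfold netLoss
  linarith

lemma net_right_inv {p q : ℕ} (A : Matrix (Fin p) (Fin q) ℝ) (h : A.rank = p) :
    ∃ R : Matrix (Fin q) (Fin p) ℝ, A * R = 1 := by
  rw [← Matrix.mulVec_surjective_iff_exists_right_inverse]
  have : LinearMap.range A.mulVecLin = ⊤ := by
    apply Submodule.eq_top_of_finrank_eq
    rw [Module.finrank_fin_fun]
    exact h
  exact LinearMap.range_eq_top.mp this

lemma net_first {H : ℕ} {d : Fin (H + 2) → ℕ}
    (W : ∀ i : Fin (H + 1), Matrix (Fin (d i.succ)) (Fin (d i.castSucc)) ℝ)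
    (j : Fin (H + 2)) (hj : j ≠ 0) :
    ∃ A : Matrix (Fin (d j)) (Fin (d (Fin.succ 0))) ℝ,
      ∀ U : ∀ i : Fin (H + 1), Matrix (Fin (d i.succ)) (Fin (d i.castSucc)) ℝ,
        (∀ i, i ≠ 0 → U i = W i) →
        netProdUpTo U j = A * netProdUpTo U (Fin.succ 0) := by
  induction j using Fin.induction with
  | zero => exact absurd rfl hj
  | succ i ih =>
    by_cases hi : i = 0
    · subst hi
      exact ⟨1, fun U _ => (Matrix.one_mul _).symm⟩
    · obtain ⟨A, hA⟩ := ih (fun h => hi (Fin.castSucc_injective _ h))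
      refine ⟨W i * A, fun U hU => ?_⟩
      rw [netProdUpTo_succ, hU i hi, hA U hU, Matrix.mul_assoc]

lemma net_zero {H : ℕ} {d : Fin (H + 2) → ℕ} (z : Fin (H + 2)) (hz : z = 0) :
    ∃ (B : Matrix (Fin (d z)) (Fin (d 0)) ℝ)
      (C : Matrix (Fin (d 0)) (Fin (d z)) ℝ), C * B = 1 ∧
      ∀ U : ∀ i : Fin (H + 1), Matrix (Fin (d i.succ)) (Fin (d i.castSucc)) ℝ,
        netProdUpTo U z = B := by
  subst hz
  exact ⟨1, 1, Matrix.mul_one _, fun _ => rfl⟩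

lemma net_off {H : ℕ} {d : Fin (H + 2) → ℕ}
    (W : ∀ i : Fin (H + 1), Matrix (Fin (d i.succ)) (Fin (d i.castSucc)) ℝ)
    (i₀ : Fin (H + 1)) (D : Matrix (Fin (d i₀.succ)) (Fin (d i₀.castSucc)) ℝ) (t : ℝ)
    (i : Fin (H + 1)) (hi : i ≠ i₀) : (W + t • (Pi.single i₀ D : ∀ i : Fin (H + 1),
      Matrix (Fin (d i.succ)) (Fin (d i.castSucc)) ℝ)) i = W i := by
  rw [Pi.add_apply, Pi.smul_apply, Pi.single_eq_of_ne hi, smul_zero, add_zero]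

lemma net_transfer {H : ℕ} {d : Fin (H + 2) → ℕ} (z z' : Fin (H + 2)) (hz : z' = z) :
    ∃ T : Matrix (Fin (d z)) (Fin (d z')) ℝ, ∃ S : Matrix (Fin (d z')) (Fin (d z)) ℝ,
      T * S = 1 ∧ ∀ U : ∀ i : Fin (H + 1), Matrix (Fin (d i.succ)) (Fin (d i.castSucc)) ℝ,
        netProdUpTo U z = T * netProdUpTo U z' := by
  subst hz
  exact ⟨1, 1, Matrix.mul_one _, fun _ => (Matrix.one_mul _).symm⟩

lemma net_last {H : ℕ} {d : Fin (H + 2) → ℕ}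
    (W W' : ∀ i : Fin (H + 1), Matrix (Fin (d i.succ)) (Fin (d i.castSucc)) ℝ)
    (hW : ∀ i, i ≠ Fin.last H → W i = W' i) (j : Fin (H + 2)) (hj : j ≠ Fin.last (H + 1)) :
    netProdUpTo W j = netProdUpTo W' j := by
  induction j using Fin.induction with
  | zero => rfl
  | succ i ih =>
    rw [netProdUpTo_succ, netProdUpTo_succ, ih (Fin.castSucc_lt_last i).ne, hW i]
    rintro rfl
    exact hj rfl

theorem critical_point_of_full_rank_is_global_min
    (H m : ℕ) (hH : 1 ≤ H) (d : Fin (H + 2) → ℕ) (hd : ∀ j, 0 < d j)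
    (X : Matrix (Fin (d 0)) (Fin m) ℝ)
    (Y : Matrix (Fin (d (Fin.last (H + 1)))) (Fin m) ℝ)
    (k : ℕ) (hk : k = min (d 0) (d (Fin.last (H + 1))))
    (hwidth : Finset.univ.inf' Finset.univ_nonempty d = k)
    (W : ∀ i : Fin (H + 1), Matrix (Fin (d i.succ)) (Fin (d i.castSucc)) ℝ)
    (hcrit : fderiv ℝ (netLoss X Y) W = 0)
    (hrank : (netProd W).rank = k) :
    ∀ V : ∀ i : Fin (H + 1), Matrix (Fin (d i.succ)) (Fin (d i.castSucc)) ℝ,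
      netLoss X Y W ≤ netLoss X Y V := by
  intro V
  apply net_min
  rcases le_total (d (Fin.last (H + 1))) (d 0) with hle | hle
  · rw [min_eq_right hle] at hk
    obtain ⟨R, hR⟩ := net_right_inv (netProd W) (hrank.trans hk)
    obtain ⟨A, hA⟩ := net_first W (Fin.last (H + 1)) (Fin.last_pos).ne'
    obtain ⟨B, C, hCB, hB⟩ := net_zero (H := H) (d := d) (Fin.castSucc 0) rfl
    have hU : ∀ U : ∀ i : Fin (H + 1), Matrix (Fin (d i.succ)) (Fin (d i.castSucc)) ℝ,
        (∀ i, i ≠ 0 → U i = W i) → netProd U = A * (U 0 * B) := by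
      intro U h
      rw [netProd, hA U h, netProdUpTo_succ, hB]
    have hP := hU W fun _ _ => rfl
    have hAR : A * (W 0 * B * R) = 1 := by
      rw [← Matrix.mul_assoc, ← hP, hR]
    refine net_crit X Y W (Pi.single 0 (W 0 * B * R * (netProd V - netProd W) * C))
      hcrit _ fun t => ?_
    rw [hU _ (net_off W _ _ t), Pi.add_apply, Pi.smul_apply, Pi.single_eq_same,
      Matrix.add_mul, Matrix.mul_add, ← hP, Matrix.smul_mul, Matrix.mul_smul]
    congr 2
    rw [Matrix.mul_assoc _ C B, hCB, Matrix.mul_one, ← Matrix.mul_assoc, hAR, Matrix.one_mul]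
  · rw [min_eq_left hle] at hk
    obtain ⟨R, hR⟩ := net_right_inv (netProd W).transpose
      ((Matrix.rank_transpose _).trans (hrank.trans hk))
    have hL : R.transpose * netProd W = 1 := by
      have := congrArg Matrix.transpose hR
      simpa using this
    obtain ⟨T, S, hTS, hT⟩ := net_transfer (H := H) (d := d)
      (Fin.last (H + 1)) (Fin.last H).succ rfl
    have hU : ∀ U : ∀ i : Fin (H + 1), Matrix (Fin (d i.succ)) (Fin (d i.castSucc)) ℝ,
        (∀ i, i ≠ Fin.last H → U i = W i) →
        netProd U = T * (U (Fin.last H) * netProdUpTo W (Fin.last H).castSucc) := by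
      intro U h
      rw [← net_last U W h _ (Fin.castSucc_lt_last _).ne, ← netProdUpTo_succ, netProd, hT]
    have hP := hU W fun _ _ => rfl
    refine net_crit X Y W (Pi.single (Fin.last H)
      (S * ((netProd V - netProd W) * (R.transpose * (T * W (Fin.last H)))))) hcrit _ fun t => ?_
    rw [hU _ (net_off W _ _ t), Pi.add_apply, Pi.smul_apply, Pi.single_eq_same,
      Matrix.add_mul, Matrix.mul_add, ← hP, Matrix.smul_mul, Matrix.mul_smul]
    congr 2
    rw [Matrix.mul_assoc S, ← Matrix.mul_assoc T, hTS, Matrix.one_mul, Matrix.mul_assoc,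
      Matrix.mul_assoc, Matrix.mul_assoc, ← hP, hL, Matrix.mul_one]
end

section
/- Assume the width condition min(d_0, d_1, …, d_{H+1}) = min(d_0, d_{H+1}). Then every local minimum of L is a global minimum of L. -/
attribute [local instance] Matrix.frobeniusNormedAddCommGroup Matrix.frobeniusNormedSpace

/-- The chained product `W_{H+1} ⋯ W_{j+1}`. -/
noncomputable def netSuf {H : ℕ} {d : Fin (H + 2) → ℕ}
    (W : ∀ i : Fin (H + 1), Matrix (Fin (d i.succ)) (Fin (d i.castSucc)) ℝ)
    (j : Fin (H + 2)) : Matrix (Fin (d (Fin.last (H + 1)))) (Fin (d j)) ℝ :=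
  Fin.reverseInduction (motive := fun j => Matrix (Fin (d (Fin.last (H + 1)))) (Fin (d j)) ℝ)
    1 (fun i acc => acc * W i) j

section helpers

variable {H m : ℕ} {d : Fin (H + 2) → ℕ}
  (W : ∀ i : Fin (H + 1), Matrix (Fin (d i.succ)) (Fin (d i.castSucc)) ℝ)

theorem pre_zero : netProdUpTo W 0 = 1 := rfl

theorem pre_succ (i : Fin (H + 1)) :
    netProdUpTo W i.succ = W i * netProdUpTo W i.castSucc := by
  simp [netProdUpTo]

theorem suf_last : netSuf W (Fin.last (H + 1)) = 1 := by
  simp [netSuf]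

theorem suf_castSucc (i : Fin (H + 1)) :
    netSuf W i.castSucc = netSuf W i.succ * W i := by
  simp [netSuf]

theorem netProd_eq (j : Fin (H + 2)) : netProd W = netSuf W j * netProdUpTo W j := by
  induction j using Fin.reverseInduction with
  | last => rw [suf_last, Matrix.one_mul]; rfl
  | cast i ih => rw [ih, pre_succ, suf_castSucc, Matrix.mul_assoc]

theorem pre_update (i : Fin (H + 1)) (M) (j : Fin (H + 2)) (hj : j ≤ i.castSucc) :
    netProdUpTo (Function.update W i M) j = netProdUpTo W j := by
  induction j using Fin.induction with
  | zero => rfl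
  | succ k ih =>
    have hk : k < i := by
      simp only [Fin.le_def, Fin.lt_def, Fin.val_succ, Fin.val_castSucc] at hj ⊢
      omega
    rw [pre_succ, pre_succ, ih (by simp only [Fin.le_def, Fin.lt_def, Fin.val_succ, Fin.val_castSucc] at hk ⊢; omega), Function.update_of_ne hk.ne]

theorem suf_update (i : Fin (H + 1)) (M) (j : Fin (H + 2)) (hj : i.succ ≤ j) :
    netSuf (Function.update W i M) j = netSuf W j := by
  induction j using Fin.reverseInduction with
  | last => rw [suf_last, suf_last]
  | cast k ih =>
    have hk : i < k := by
      simp only [Fin.le_def, Fin.lt_def, Fin.val_succ, Fin.val_castSucc] at hj ⊢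
      omega
    rw [suf_castSucc, suf_castSucc, ih (by simp only [Fin.le_def, Fin.lt_def, Fin.val_succ, Fin.val_castSucc] at hk ⊢; omega), Function.update_of_ne hk.ne']

theorem netProd_update (i : Fin (H + 1)) (M) :
    netProd (Function.update W i M) = netSuf W i.succ * M * netProdUpTo W i.castSucc := by
  rw [netProd_eq _ i.castSucc, pre_update _ _ _ _ le_rfl, suf_castSucc,
    suf_update _ _ _ _ le_rfl, Function.update_self]

theorem quad {p q : ℕ} (E F : Matrix (Fin p) (Fin q) ℝ) (t : ℝ) :
    (1 / 2) * ∑ a, ∑ b, ((E + t • F) a b) ^ 2 =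
      (1 / 2) * ∑ a, ∑ b, (E a b) ^ 2 + t * (E.transpose * F).trace
        + t ^ 2 * ((1 / 2) * ∑ a, ∑ b, (F a b) ^ 2) := by
  have h : (E.transpose * F).trace = ∑ a, ∑ b, E a b * F a b := by
    rw [Finset.sum_comm]
    simp [Matrix.trace, Matrix.mul_apply]
  rw [h]
  simp only [Finset.mul_sum, ← Finset.sum_add_distrib]
  refine Finset.sum_congr rfl fun a _ => Finset.sum_congr rfl fun b _ => ?_
  simp only [Matrix.add_apply, Matrix.smul_apply, smul_eq_mul]
  ring

theorem cont_update (i : Fin (H + 1)) (M : Matrix (Fin (d i.succ)) (Fin (d i.castSucc)) ℝ) :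
    Continuous (fun t : ℝ => Function.update W i (W i + t • M)) := by
  refine continuous_const.update i ?_
  exact continuous_const.add (continuous_id.smul continuous_const)

theorem crit (X : Matrix (Fin (d 0)) (Fin m) ℝ)
    (Y : Matrix (Fin (d (Fin.last (H + 1)))) (Fin m) ℝ)
    (hmin : IsLocalMin (netLoss X Y) W) (i : Fin (H + 1)) :
    netProdUpTo W i.castSucc * (X * (netProd W * X - Y).transpose) * netSuf W i.succ = 0 := by
  set S := netSuf W i.succ with hS
  set P := netProdUpTo W i.castSucc with hP
  set E := netProd W * X - Y with hE
  have key : ∀ M : Matrix (Fin (d i.succ)) (Fin (d i.castSucc)) ℝ, (P * (X * E.transpose) * S * M).trace = 0 := by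
    intro M
    have hc := cont_update W i M
    have h0 : Function.update W i (W i + (0 : ℝ) • M) = W := by simp
    have hg : IsLocalMin (fun t : ℝ => netLoss X Y (Function.update W i (W i + t • M))) 0 := by
      have := hc.tendsto 0
      rw [h0] at this
      have h2 := this.eventually hmin
      unfold IsLocalMin IsMinFilter
      beta_reduce
      rw [h0]
      exact h2
    have hform : (fun t : ℝ => netLoss X Y (Function.update W i (W i + t • M))) =
        fun t => (1 / 2) * ∑ a, ∑ b, (E a b) ^ 2 + t * (E.transpose * (S * M * P * X)).trace
        + t ^ 2 * ((1 / 2) * ∑ a, ∑ b, ((S * M * P * X) a b) ^ 2) := by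
      funext t
      rw [← quad]
      unfold netLoss
      have : netProd (Function.update W i (W i + t • M)) * X - Y = E + t • (S * M * P * X) := by
        rw [netProd_update, hE, netProd_eq W i.castSucc, suf_castSucc]
        simp only [Matrix.mul_add, Matrix.add_mul, Matrix.mul_smul, Matrix.smul_mul, ← hS, ← hP]
        abel
      rw [this]
    rw [hform] at hg
    have hd : HasDerivAt (fun t : ℝ => (1 / 2) * ∑ a, ∑ b, (E a b) ^ 2
        + t * (E.transpose * (S * M * P * X)).trace
        + t ^ 2 * ((1 / 2) * ∑ a, ∑ b, ((S * M * P * X) a b) ^ 2))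
        ((0 + 1 * (E.transpose * (S * M * P * X)).trace)
        + ((2 : ℕ) * (0 : ℝ) ^ (2 - 1) * 1) * ((1 / 2) * ∑ a, ∑ b, ((S * M * P * X) a b) ^ 2)) 0 :=
      ((hasDerivAt_const _ _).add ((hasDerivAt_id (0 : ℝ)).mul_const _)).add
        (((hasDerivAt_id (0 : ℝ)).pow 2).mul_const _)
    have hz := hg.hasDerivAt_eq_zero hd
    have hz' : (E.transpose * (S * M * P * X)).trace = 0 := by simpa using hz
    rw [← hz', show P * (X * E.transpose) * S * M = (P * X) * (E.transpose * (S * M)) by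
      simp only [Matrix.mul_assoc], Matrix.trace_mul_comm]
    simp only [Matrix.mul_assoc]
  have h := key (P * (X * E.transpose) * S).conjTranspose
  exact Matrix.trace_mul_conjTranspose_self_eq_zero_iff.mp h

theorem exists_left_null {p q : ℕ} (hpq : q ≤ p) (A : Matrix (Fin p) (Fin q) ℝ)
    (x : Fin q → ℝ) (hx : x ≠ 0) (hAx : A.mulVec x = 0) :
    ∃ u : Fin p → ℝ, u ≠ 0 ∧ Matrix.vecMul u A = 0 := by
  by_contra! hcon
  have hinj : Function.Injective A.transpose.mulVecLin := by
    rw [← LinearMap.ker_eq_bot, LinearMap.ker_eq_bot']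
    intro u hu
    by_contra hne
    exact hcon u hne (by simpa [Matrix.mulVec_transpose] using hu)
  have h1 : A.transpose.rank = p := by
    rw [Matrix.rank, LinearMap.finrank_range_of_inj hinj]; simp
  rw [Matrix.rank_transpose] at h1
  have h2 := A.mulVecLin.finrank_range_add_finrank_ker
  have h3 : Module.finrank ℝ (LinearMap.range A.mulVecLin) = p := h1
  simp only [Module.finrank_fintype_fun_eq_card, Fintype.card_fin] at h2
  have h4 : Module.finrank ℝ (LinearMap.ker A.mulVecLin) = 0 := by omega
  rw [Submodule.finrank_eq_zero] at h4
  have : x ∈ LinearMap.ker A.mulVecLin := by simpa using hAx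
  rw [h4] at this
  exact hx (by simpa using this)

theorem exists_right_null {p q : ℕ} (hpq : p ≤ q) (A : Matrix (Fin p) (Fin q) ℝ)
    (x : Fin p → ℝ) (hx : x ≠ 0) (hAx : Matrix.vecMul x A = 0) :
    ∃ u : Fin q → ℝ, u ≠ 0 ∧ A.mulVec u = 0 := by
  obtain ⟨u, hu, h⟩ := exists_left_null hpq A.transpose x hx (by rwa [Matrix.mulVec_transpose])
  exact ⟨u, hu, by rwa [Matrix.vecMul_transpose] at h⟩

/-- Either a left inverse or a null vector. -/
theorem left_dich {p q : ℕ} (A : Matrix (Fin p) (Fin q) ℝ) :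
    (∃ B : Matrix (Fin q) (Fin p) ℝ, B * A = 1) ∨ ∃ x, x ≠ 0 ∧ A.mulVec x = 0 := by
  by_cases h : Function.Injective A.mulVec
  · left
    obtain ⟨g, hg⟩ := LinearMap.exists_leftInverse_of_injective (Matrix.toLin' A)
      (LinearMap.ker_eq_bot.mpr h)
    refine ⟨LinearMap.toMatrix' g, ?_⟩
    have h2 := congrArg LinearMap.toMatrix' hg
    rwa [LinearMap.toMatrix'_comp, LinearMap.toMatrix'_toLin', LinearMap.toMatrix'_id] at h2
  · right
    by_contra! hcon
    apply h
    intro x y hxy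
    by_contra hne
    exact hcon (x - y) (sub_ne_zero.mpr hne) (by rw [Matrix.mulVec_sub, sub_eq_zero]; exact hxy)

theorem right_dich {p q : ℕ} (A : Matrix (Fin p) (Fin q) ℝ) :
    (∃ B : Matrix (Fin q) (Fin p) ℝ, A * B = 1) ∨ ∃ x, x ≠ 0 ∧ Matrix.vecMul x A = 0 := by
  rcases left_dich A.transpose with ⟨B, hB⟩ | ⟨x, hx, h⟩
  · left
    exact ⟨B.transpose, by rw [← Matrix.transpose_inj]; simpa using hB⟩
  · exact Or.inr ⟨x, hx, by rwa [Matrix.mulVec_transpose] at h⟩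

/-- A small perturbation of one layer that keeps the product keeps local minimality. -/
theorem perturb (X : Matrix (Fin (d 0)) (Fin m) ℝ)
    (Y : Matrix (Fin (d (Fin.last (H + 1)))) (Fin m) ℝ)
    (hmin : IsLocalMin (netLoss X Y) W) (i : Fin (H + 1)) (M)
    (hM : netSuf W i.succ * M * netProdUpTo W i.castSucc = 0) :
    ∃ t : ℝ, t ≠ 0 ∧ netProd (Function.update W i (W i + t • M)) = netProd W ∧
      IsLocalMin (netLoss X Y) (Function.update W i (W i + t • M)) := by
  have hprod : ∀ t : ℝ, netProd (Function.update W i (W i + t • M)) = netProd W := by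
    intro t
    rw [netProd_update, netProd_eq W i.castSucc, suf_castSucc]
    simp only [Matrix.mul_add, Matrix.add_mul, Matrix.mul_smul, Matrix.smul_mul, hM]
    simp
  have hc := (cont_update W i M).tendsto 0
  rw [show Function.update W i (W i + (0 : ℝ) • M) = W by simp] at hc
  have h1 := hc.eventually (eventually_eventually_nhds.mpr hmin)
  have h2 : ∀ᶠ t : ℝ in nhdsWithin 0 {0}ᶜ, t ≠ 0 := eventually_mem_nhdsWithin
  obtain ⟨t, ht, ht0⟩ := ((h1.filter_mono nhdsWithin_le_nhds).and h2).exists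
  refine ⟨t, ht0, hprod t, ?_⟩
  have : netLoss X Y (Function.update W i (W i + t • M)) = netLoss X Y W := by
    unfold netLoss; rw [hprod]
  unfold IsLocalMin IsMinFilter
  rw [this]
  exact ht

theorem pre_null (x : Fin (d 0) → ℝ) (i j : Fin (H + 2)) (hij : i ≤ j)
    (hx : (netProdUpTo W i).mulVec x = 0) : (netProdUpTo W j).mulVec x = 0 := by
  induction j using Fin.induction with
  | zero => rwa [show i = 0 from le_antisymm hij (Fin.zero_le _)] at hx
  | succ k ih =>
    rcases hij.eq_or_lt with rfl | h
    · exact hx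
    · rw [pre_succ, ← Matrix.mulVec_mulVec, ih (by
        simp only [Fin.le_def, Fin.lt_def, Fin.val_succ, Fin.val_castSucc] at h ⊢; omega), Matrix.mulVec_zero]

theorem suf_null (x : Fin (d (Fin.last (H + 1))) → ℝ) (i j : Fin (H + 2)) (hij : j ≤ i)
    (hx : Matrix.vecMul x (netSuf W i) = 0) : Matrix.vecMul x (netSuf W j) = 0 := by
  induction j using Fin.reverseInduction with
  | last => rwa [show i = Fin.last _ from le_antisymm (Fin.le_last _) hij] at hx
  | cast k ih =>
    rcases hij.eq_or_lt with rfl | h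
    · exact hx
    · rw [suf_castSucc, ← Matrix.vecMul_vecMul, ih (by
        simp only [Fin.le_def, Fin.lt_def, Fin.val_succ, Fin.val_castSucc] at h ⊢; omega), Matrix.zero_vecMul]

theorem caseA (X : Matrix (Fin (d 0)) (Fin m) ℝ)
    (Y : Matrix (Fin (d (Fin.last (H + 1)))) (Fin m) ℝ) (hd : ∀ j, d 0 ≤ d j)
    (A : Matrix (Fin (d (Fin.last (H + 1)))) (Fin (d 0)) ℝ)
    (i : Fin (H + 1)) (j : Fin (H + 2)) : i.succ ≤ j →
    ∀ W : (∀ i : Fin (H + 1), Matrix (Fin (d i.succ)) (Fin (d i.castSucc)) ℝ),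
    IsLocalMin (netLoss X Y) W → netProd W = A →
    (∃ B : Matrix (Fin (d 0)) (Fin (d i.castSucc)) ℝ, B * netProdUpTo W i.castSucc = 1) →
    (∃ x, x ≠ 0 ∧ (netProdUpTo W i.succ).mulVec x = 0) →
    (X * (A * X - Y).transpose) * netSuf W j = 0 := by
  induction j using Fin.induction with
  | zero => intro h; simp [Fin.le_def] at h
  | succ k ih =>
    intro hik W hmin hA hB hx
    set K := X * (A * X - Y).transpose with hK
    rcases hik.eq_or_lt with h | h
    · obtain rfl : i = k := Fin.succ_injective _ h
      obtain ⟨B, hB⟩ := hB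
      have hc := crit W X Y hmin i
      rw [hA, ← hK] at hc
      calc K * netSuf W i.succ
          = B * (netProdUpTo W i.castSucc * K * netSuf W i.succ) := by
            rw [← Matrix.mul_assoc, ← Matrix.mul_assoc, hB, Matrix.one_mul]
        _ = 0 := by rw [hc, Matrix.mul_zero]
    · have hle : i.succ ≤ k.castSucc := by
        simp only [Fin.le_def, Fin.lt_def, Fin.val_succ, Fin.val_castSucc] at h ⊢; omega
      have hle' : i.castSucc ≤ k.castSucc := (Fin.castSucc_lt_succ (i := i)).le.trans hle
      have h0 := ih hle W hmin hA hB hx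
      obtain ⟨x, hx0, hx1⟩ := hx
      obtain ⟨u, hu, hu0⟩ := exists_left_null (hd _) _ x hx0 (pre_null W x _ _ hle hx1)
      obtain ⟨c, hc⟩ := Function.ne_iff.mp hu
      rw [Matrix.ext_iff_mulVec]
      intro v
      rw [Matrix.zero_mulVec]
      obtain ⟨t, ht, hprod, hmin'⟩ := perturb W X Y hmin k (Matrix.vecMulVec v u) (by
        rw [Matrix.mul_assoc, Matrix.vecMulVec_mul, hu0]
        have hz : Matrix.vecMulVec v (0 : Fin (d 0) → ℝ) = 0 := by
          ext a b
          simp [Matrix.vecMulVec_apply]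
        rw [hz, Matrix.mul_zero])
      have h1 := ih hle _ hmin' (hprod.trans hA) (by rwa [pre_update _ _ _ _ hle'])
        (by rw [pre_update _ _ _ _ hle]; exact ⟨x, hx0, hx1⟩)
      rw [suf_castSucc, suf_update _ _ _ _ le_rfl, Function.update_self, Matrix.mul_add,
        ← suf_castSucc, Matrix.mul_add, h0, zero_add, Matrix.mul_smul, Matrix.mul_smul,
        smul_eq_zero_iff_right ht, ← Matrix.mul_assoc, Matrix.mul_vecMulVec] at h1
      funext r
      have h2 := congrFun (congrFun h1 r) c
      rw [Matrix.vecMulVec_apply] at h2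
      exact (mul_eq_zero.mp h2).resolve_right hc

theorem caseB (X : Matrix (Fin (d 0)) (Fin m) ℝ)
    (Y : Matrix (Fin (d (Fin.last (H + 1)))) (Fin m) ℝ) (hd : ∀ j, d (Fin.last (H + 1)) ≤ d j)
    (A : Matrix (Fin (d (Fin.last (H + 1)))) (Fin (d 0)) ℝ)
    (i : Fin (H + 1)) (j : Fin (H + 2)) : j ≤ i.castSucc →
    ∀ W : (∀ i : Fin (H + 1), Matrix (Fin (d i.succ)) (Fin (d i.castSucc)) ℝ),
    IsLocalMin (netLoss X Y) W → netProd W = A →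
    (∃ B : Matrix (Fin (d i.succ)) (Fin (d (Fin.last (H + 1)))) ℝ, netSuf W i.succ * B = 1) →
    (∃ x, x ≠ 0 ∧ Matrix.vecMul x (netSuf W i.castSucc) = 0) →
    netProdUpTo W j * (X * (A * X - Y).transpose) = 0 := by
  induction j using Fin.reverseInduction with
  | last => intro h; exact absurd h (not_le.mpr (Fin.castSucc_lt_last i))
  | cast k ih =>
    intro hik W hmin hA hB hx
    set K := X * (A * X - Y).transpose with hK
    rcases hik.eq_or_lt with h | h
    · obtain rfl : k = i := Fin.castSucc_injective _ h
      obtain ⟨B, hB⟩ := hB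
      have hc := crit W X Y hmin k
      rw [hA, ← hK] at hc
      calc netProdUpTo W k.castSucc * K
          = (netProdUpTo W k.castSucc * K * netSuf W k.succ) * B := by
            rw [Matrix.mul_assoc _ _ B, hB, Matrix.mul_one]
        _ = 0 := by rw [hc, Matrix.zero_mul]
    · have hle : k.succ ≤ i.castSucc := by
        simp only [Fin.le_def, Fin.lt_def, Fin.val_succ, Fin.val_castSucc] at h ⊢; omega
      have hle' : k.succ ≤ i.succ := hle.trans (Fin.castSucc_lt_succ (i := i)).le
      have h0 := ih hle W hmin hA hB hx
      obtain ⟨x, hx0, hx1⟩ := hx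
      obtain ⟨u, hu, hu0⟩ := exists_right_null (hd _) _ x hx0 (suf_null W x _ _ hle hx1)
      obtain ⟨c, hc⟩ := Function.ne_iff.mp hu
      rw [Matrix.ext_iff_vecMul]
      intro v
      rw [Matrix.vecMul_zero]
      obtain ⟨t, ht, hprod, hmin'⟩ := perturb W X Y hmin k (Matrix.vecMulVec u v) (by
        rw [Matrix.mul_vecMulVec, hu0, Matrix.zero_vecMulVec, Matrix.zero_mul])
      have h1 := ih hle _ hmin' (hprod.trans hA) (by rwa [suf_update _ _ _ _ hle'])
        (by rw [suf_update _ _ _ _ hle]; exact ⟨x, hx0, hx1⟩)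
      rw [pre_succ, pre_update _ _ _ _ le_rfl, Function.update_self, Matrix.add_mul,
        ← pre_succ, Matrix.add_mul, h0, zero_add, Matrix.smul_mul, Matrix.smul_mul,
        smul_eq_zero_iff_right ht, Matrix.mul_assoc, Matrix.vecMulVec_mul] at h1
      funext r
      have h2 := congrFun (congrFun h1 c) r
      rw [Matrix.vecMulVec_apply] at h2
      exact (mul_eq_zero.mp h2).resolve_left hc

theorem grad_zero_A (X : Matrix (Fin (d 0)) (Fin m) ℝ)
    (Y : Matrix (Fin (d (Fin.last (H + 1)))) (Fin m) ℝ) (hd : ∀ j, d 0 ≤ d j)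
    (hmin : IsLocalMin (netLoss X Y) W) : X * (netProd W * X - Y).transpose = 0 := by
  by_cases hall : ∀ j, ∃ B : Matrix (Fin (d 0)) (Fin (d j)) ℝ, B * netProdUpTo W j = 1
  · obtain ⟨B, hB⟩ := hall (Fin.last H).castSucc
    have hc := crit W X Y hmin (Fin.last H)
    have h1 := congrArg (B * ·) hc
    simp only [← Matrix.mul_assoc, hB, Matrix.one_mul, Matrix.mul_zero] at h1
    have h2 : X * (netProd W * X - Y).transpose * netSuf W (Fin.last (H + 1)) = 0 := h1
    rwa [suf_last, Matrix.mul_one] at h2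
  · have : ∃ i : Fin (H + 1),
        (∃ B : Matrix (Fin (d 0)) (Fin (d i.castSucc)) ℝ, B * netProdUpTo W i.castSucc = 1) ∧
        ¬ (∃ B : Matrix (Fin (d 0)) (Fin (d i.succ)) ℝ, B * netProdUpTo W i.succ = 1) := by
      by_contra! hcon
      apply hall
      intro j
      induction j using Fin.induction with
      | zero => exact ⟨1, by rw [pre_zero, Matrix.one_mul]⟩
      | succ k ih =>
        by_contra hk
        exact hk (hcon k ih)
    obtain ⟨i, h1, h2⟩ := this
    have := caseA X Y hd (netProd W) i (Fin.last _) (Fin.le_last _) W hmin rfl h1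
      ((left_dich _).resolve_left h2)
    rwa [suf_last, Matrix.mul_one] at this

theorem grad_zero_B (X : Matrix (Fin (d 0)) (Fin m) ℝ)
    (Y : Matrix (Fin (d (Fin.last (H + 1)))) (Fin m) ℝ) (hd : ∀ j, d (Fin.last (H + 1)) ≤ d j)
    (hmin : IsLocalMin (netLoss X Y) W) : X * (netProd W * X - Y).transpose = 0 := by
  by_cases hall : ∀ j, ∃ B : Matrix (Fin (d j)) (Fin (d (Fin.last (H + 1)))) ℝ,
      netSuf W j * B = 1
  · obtain ⟨B, hB⟩ := hall (Fin.succ 0)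
    have hc := crit W X Y hmin 0
    have h1 := congrArg (· * B) hc
    simp only [Matrix.mul_assoc, hB, Matrix.mul_one, Matrix.zero_mul] at h1
    have h2 : netProdUpTo W 0 * (X * (netProd W * X - Y).transpose) = 0 := h1
    rwa [pre_zero, Matrix.one_mul] at h2
  · have : ∃ i : Fin (H + 1),
        (∃ B : Matrix (Fin (d i.succ)) (Fin (d (Fin.last (H + 1)))) ℝ,
          netSuf W i.succ * B = 1) ∧
        ¬ (∃ B : Matrix (Fin (d i.castSucc)) (Fin (d (Fin.last (H + 1)))) ℝ,
          netSuf W i.castSucc * B = 1) := by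
      by_contra! hcon
      apply hall
      intro j
      induction j using Fin.reverseInduction with
      | last => exact ⟨1, by rw [suf_last, Matrix.one_mul]⟩
      | cast k ih =>
        by_contra hk
        exact hk (hcon k ih)
    obtain ⟨i, h1, h2⟩ := this
    have := caseB X Y hd (netProd W) i 0 (Fin.zero_le _) W hmin rfl h1
      ((right_dich _).resolve_left h2)
    rwa [pre_zero, Matrix.one_mul] at this

end helpers

theorem local_min_is_global_min
    (H m : ℕ) (hH : 1 ≤ H) (d : Fin (H + 2) → ℕ) (hd : ∀ j, 0 < d j)
    (X : Matrix (Fin (d 0)) (Fin m) ℝ)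
    (Y : Matrix (Fin (d (Fin.last (H + 1)))) (Fin m) ℝ)
    (hwidth : Finset.univ.inf' Finset.univ_nonempty d
      = min (d 0) (d (Fin.last (H + 1))))
    (W : ∀ i : Fin (H + 1), Matrix (Fin (d i.succ)) (Fin (d i.castSucc)) ℝ)
    (hmin : IsLocalMin (netLoss X Y) W) :
    ∀ V : ∀ i : Fin (H + 1), Matrix (Fin (d i.succ)) (Fin (d i.castSucc)) ℝ,
      netLoss X Y W ≤ netLoss X Y V := by
  have hG : X * (netProd W * X - Y).transpose = 0 := by
    rcases le_total (d 0) (d (Fin.last (H + 1))) with h | h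
    · rw [min_eq_left h] at hwidth
      exact grad_zero_A W X Y (fun j => hwidth ▸ Finset.inf'_le d (Finset.mem_univ j)) hmin
    · rw [min_eq_right h] at hwidth
      exact grad_zero_B W X Y (fun j => hwidth ▸ Finset.inf'_le d (Finset.mem_univ j)) hmin
  intro V
  have hq := quad (netProd W * X - Y) ((netProd V - netProd W) * X) 1
  have he : netProd W * X - Y + (1 : ℝ) • ((netProd V - netProd W) * X) = netProd V * X - Y := by
    rw [one_smul, Matrix.sub_mul]; abel
  have ht : ((netProd W * X - Y).transpose * ((netProd V - netProd W) * X)).trace = 0 := by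
    rw [Matrix.trace_mul_comm, Matrix.mul_assoc, hG, Matrix.mul_zero, Matrix.trace_zero]
  rw [he, ht] at hq
  unfold netLoss
  rw [hq]
  have : 0 ≤ ∑ a, ∑ b, (((netProd V - netProd W) * X) a b) ^ 2 :=
    Finset.sum_nonneg fun a _ => Finset.sum_nonneg fun b _ => sq_nonneg _
  linarith
end

section
/- Assume x ≠ 0. Then w ∈ ℝ^n is a critical point of l (i.e., ∇l(w) = 0) if and only if either (∏_{k=1}^n w_k) x = y, or there exist indices i ≠ j with w_i = 0 and w_j = 0. In the first case l(w) = 0 (a global minimum); in the second case l(w) = ½y². Thus the critical set of l is the union of the global minimum set {w : (∏_k w_k) x = y} and the C(n,2) coordinate subspaces {w : w_i = w_j = 0} for i < j, all of which contain the origin. -/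
/-- The width-one linear network loss `l(w) = ½(y − (∏ₖ wₖ) x)²`. -/
noncomputable def wLoss (n : ℕ) (x y : ℝ) (w : Fin n → ℝ) : ℝ :=
  (1 / 2) * (y - (∏ k, w k) * x) ^ 2

/-- The partial derivative of `f` with respect to the `i`-th coordinate, at `w`. -/
noncomputable def pderivAt {n : ℕ} (i : Fin n) (f : (Fin n → ℝ) → ℝ)
    (w : Fin n → ℝ) : ℝ :=
  deriv (fun t => f (Function.update w i t)) (w i)

/-- The Hessian matrix of the width-one loss at `w`. -/
noncomputable def wHess (n : ℕ) (x y : ℝ) (w : Fin n → ℝ) : Matrix (Fin n) (Fin n) ℝ :=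
  Matrix.of fun a b => pderivAt b (pderivAt a (wLoss n x y)) w

theorem wLoss_hasFDerivAt (n : ℕ) (x y : ℝ) (w : Fin n → ℝ) :
    HasFDerivAt (wLoss n x y)
      ((-((y - (∏ k, w k) * x) * x)) •
        ∑ i, (∏ j ∈ Finset.univ.erase i, w j) •
          (ContinuousLinearMap.proj i : (Fin n → ℝ) →L[ℝ] ℝ)) w := by
  have h := hasFDerivAt_finset_prod (𝕜 := ℝ) (𝔸' := ℝ) (u := (Finset.univ : Finset (Fin n))) (x := w)
  have h2 := ((((h.mul_const x).const_sub y).pow 2).const_mul (1 / 2))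
  refine (h2.congr_fderiv ?_)
  ext v
  simp
  ring

theorem wLoss_crit_iff (n : ℕ) (hn : 2 ≤ n) (x y : ℝ) (hx : x ≠ 0) (w : Fin n → ℝ) :
    fderiv ℝ (wLoss n x y) w = 0 ↔
      ((∏ k, w k) * x = y ∨ ∃ i j : Fin n, i ≠ j ∧ w i = 0 ∧ w j = 0) := by
  rw [(wLoss_hasFDerivAt n x y w).fderiv]
  constructor
  · intro h
    by_cases hP : (∏ k, w k) * x = y
    · exact Or.inl hP
    right
    have hc : -((y - (∏ k, w k) * x) * x) ≠ 0 :=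
      neg_ne_zero.mpr (mul_ne_zero (sub_ne_zero.mpr (Ne.symm hP)) hx)
    have h' := (smul_eq_zero.mp h).resolve_left hc
    have key : ∀ i : Fin n, ∃ j, j ≠ i ∧ w j = 0 := by
      intro i
      have h3 := congrArg (fun L : (Fin n → ℝ) →L[ℝ] ℝ => L (Pi.single i 1)) h'
      simp [ContinuousLinearMap.sum_apply, Pi.single_apply, Finset.prod_eq_zero_iff] at h3
      exact h3
    obtain ⟨j, -, hj⟩ := key ⟨0, by omega⟩
    obtain ⟨k, hk, hk0⟩ := key j
    exact ⟨k, j, hk, hk0, hj⟩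
  · rintro (h | ⟨i, j, hij, hi, hj⟩)
    · simp [h]
    · have : ∀ k : Fin n, ∏ l ∈ Finset.univ.erase k, w l = 0 := by
        intro k
        by_cases hk : i = k
        · exact Finset.prod_eq_zero (i := j) (by simp; rintro rfl; exact hij hk) hj
        · exact Finset.prod_eq_zero (i := i) (by simp [hk]) hi
      simp [this]

theorem width_one_critical_points
    (n : ℕ) (hn : 2 ≤ n) (x y : ℝ) (hx : x ≠ 0) :
    (∀ w : Fin n → ℝ, fderiv ℝ (wLoss n x y) w = 0 ↔
      ((∏ k, w k) * x = y ∨ ∃ i j : Fin n, i ≠ j ∧ w i = 0 ∧ w j = 0)) ∧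
    (∀ w : Fin n → ℝ, (∏ k, w k) * x = y →
      wLoss n x y w = 0 ∧ ∀ v : Fin n → ℝ, wLoss n x y w ≤ wLoss n x y v) ∧
    (∀ w : Fin n → ℝ, (∃ i j : Fin n, i ≠ j ∧ w i = 0 ∧ w j = 0) →
      wLoss n x y w = (1 / 2) * y ^ 2) ∧
    ({w : Fin n → ℝ | fderiv ℝ (wLoss n x y) w = 0} =
      {w : Fin n → ℝ | (∏ k, w k) * x = y} ∪
        ⋃ (i : Fin n) (j : Fin n) (_ : i < j), {w : Fin n → ℝ | w i = 0 ∧ w j = 0}) ∧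
    (∀ i j : Fin n, i < j → (0 : Fin n → ℝ) ∈ {w : Fin n → ℝ | w i = 0 ∧ w j = 0}) := by
  refine ⟨wLoss_crit_iff n hn x y hx, ?_, ?_, ?_, ?_⟩
  · intro w h
    have h0 : wLoss n x y w = 0 := by simp [wLoss, h]
    refine ⟨h0, fun v => ?_⟩
    rw [h0]
    unfold wLoss
    positivity
  · rintro w ⟨i, j, -, hi, -⟩
    have : ∏ k, w k = 0 := Finset.prod_eq_zero (Finset.mem_univ i) hi
    simp [wLoss, this]
  · ext w
    simp only [Set.mem_setOf_eq, Set.mem_union, Set.mem_iUnion, exists_prop]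
    rw [wLoss_crit_iff n hn x y hx w]
    refine or_congr_right ⟨?_, ?_⟩
    · rintro ⟨i, j, hij, hi, hj⟩
      rcases lt_or_gt_of_ne hij with h | h
      · exact ⟨i, j, h, hi, hj⟩
      · exact ⟨j, i, h, hj, hi⟩
    · rintro ⟨i, j, h, hi, hj⟩
      exact ⟨i, j, h.ne, hi, hj⟩
  · intro i j _
    simp
end

section
/- Suppose x ≠ 0, all coordinates w_k ≠ 0, and (∏_{k=1}^n w_k) x = y (so w lies on the global minimum component). Then the Hessian matrix of l at w equals x² v vᵀ, where v ∈ ℝ^n has coordinates v_i = ∏_{k ≠ i} w_k. Consequently the Hessian has rank at most 1: its eigenvalues are 0 with multiplicity n − 1 together with the single eigenvalue x² ‖v‖² = ∑_{k=1}^n y² / w_k². -/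
theorem prodUpd {n : ℕ} (w : Fin n → ℝ) (a : Fin n) (t : ℝ) :
    ∏ k, Function.update w a t k = t * ∏ k ∈ Finset.univ.erase a, w k := by
  rw [Finset.prod_update_of_mem (Finset.mem_univ a), Finset.sdiff_singleton_eq_erase]

theorem pderiv_loss {n : ℕ} (x y : ℝ) (a : Fin n) (w : Fin n → ℝ) :
    pderivAt a (wLoss n x y) w
      = -(y - (∏ k, w k) * x) * x * ∏ k ∈ Finset.univ.erase a, w k := by
  unfold pderivAt wLoss
  simp only [prodUpd]
  rw [← Finset.mul_prod_erase Finset.univ w (Finset.mem_univ a)]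
  set E := ∏ k ∈ Finset.univ.erase a, w k
  have h := (((((hasDerivAt_id (w a)).mul_const E).mul_const x).const_sub y).pow 2).const_mul (1 / 2 : ℝ)
  refine Eq.trans h.deriv ?_
  simp
  ring

theorem diff_erase {n : ℕ} (a b : Fin n) (w : Fin n → ℝ) :
    DifferentiableAt ℝ
      (fun t => ∏ k ∈ Finset.univ.erase a, Function.update w b t k) (w b) := by
  by_cases h : b ∈ Finset.univ.erase a
  · simp only [Finset.prod_update_of_mem h]
    fun_prop
  · simp only [Finset.prod_update_of_notMem h]
    fun_prop

theorem hess_eq {n : ℕ} (x y : ℝ) (w : Fin n → ℝ) (hglob : (∏ k, w k) * x = y) :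
    wHess n x y w
      = x ^ 2 • Matrix.vecMulVec (fun i => ∏ k ∈ Finset.univ.erase i, w k)
          (fun i => ∏ k ∈ Finset.univ.erase i, w k) := by
  ext a b
  have h1 : pderivAt a (wLoss n x y) = fun w =>
      -(y - (∏ k, w k) * x) * x * ∏ k ∈ Finset.univ.erase a, w k :=
    funext (pderiv_loss x y a)
  simp only [wHess, Matrix.of_apply, Matrix.smul_apply, Matrix.vecMulVec_apply, smul_eq_mul]
  rw [h1]
  unfold pderivAt
  simp only [prodUpd]
  have hE := Finset.mul_prod_erase Finset.univ w (Finset.mem_univ b)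
  set E := ∏ k ∈ Finset.univ.erase b, w k
  have h := ((((((hasDerivAt_id (w b)).mul_const E).mul_const x).const_sub y).neg).mul_const x).mul
    (diff_erase a b w).hasDerivAt
  refine Eq.trans h.deriv ?_
  have h0 : y - w b * E * x = 0 := by rw [hE, hglob, sub_self]
  simp [h0]
  ring

theorem width_one_hessian_on_global_min_component
    (n : ℕ) (hn : 2 ≤ n) (x y : ℝ) (hx : x ≠ 0) (w : Fin n → ℝ)
    (hw : ∀ k, w k ≠ 0) (hglob : (∏ k, w k) * x = y) :
    wHess n x y w
      = x ^ 2 • Matrix.vecMulVec (fun i => ∏ k ∈ Finset.univ.erase i, w k)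
          (fun i => ∏ k ∈ Finset.univ.erase i, w k) ∧
    (wHess n x y w).rank ≤ 1 ∧
    x ^ 2 * (∑ i, (∏ k ∈ Finset.univ.erase i, w k) ^ 2) = ∑ k, y ^ 2 / (w k) ^ 2 ∧
    (wHess n x y w).charpoly
      = Polynomial.X ^ (n - 1)
        * (Polynomial.X - Polynomial.C (∑ k, y ^ 2 / (w k) ^ 2)) := by
  have hH := hess_eq x y w hglob
  have hS : x ^ 2 * (∑ i, (∏ k ∈ Finset.univ.erase i, w k) ^ 2) = ∑ k, y ^ 2 / (w k) ^ 2 := by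
    rw [Finset.mul_sum]
    refine Finset.sum_congr rfl fun i _ => ?_
    rw [← hglob, ← Finset.mul_prod_erase Finset.univ w (Finset.mem_univ i)]
    have := hw i
    field_simp
  refine ⟨hH, ?_, hS, ?_⟩
  · rw [hH, ← Matrix.smul_vecMulVec]
    exact Matrix.rank_vecMulVec_le _ _
  · rw [hH, ← Matrix.smul_vecMulVec, Matrix.charpoly_vecMulVec, ← hS, smul_dotProduct]
    obtain ⟨m, rfl⟩ : ∃ m, n = m + 1 := ⟨n - 1, by omega⟩
    simp only [Fintype.card_fin, Nat.add_sub_cancel, dotProduct, smul_eq_mul, ← pow_two,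
      Polynomial.smul_eq_C_mul]
    ring
end

section
/- Let i ≠ j and suppose w_i = 0 and w_j = 0 (so w lies on the saddle component indexed by {i, j}). Then every entry of the Hessian matrix of l at w is zero except the (i, j) and (j, i) entries, which both equal c := −x y ∏_{k ≠ i, j} w_k. Consequently the eigenvalues of the Hessian of l at w are c, −c, and 0 with multiplicity n − 2; equivalently, its characteristic polynomial is λ^{n−2}(λ² − c²). -/
lemma prod_update_aux {n : ℕ} (s : Finset (Fin n)) (w : Fin n → ℝ) (a : Fin n) (t : ℝ)
    (ha : a ∈ s) : ∏ k ∈ s, Function.update w a t k = t * ∏ k ∈ s.erase a, w k := by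
  rw [← Finset.mul_prod_erase s _ ha, Function.update_self]
  congr 1
  refine Finset.prod_congr rfl fun k hk => ?_
  rw [Function.update_of_ne (Finset.ne_of_mem_erase hk)]

lemma pderiv_wLoss {n : ℕ} (x y : ℝ) (a : Fin n) (w : Fin n → ℝ) :
    pderivAt a (wLoss n x y) w =
      -(x * ∏ k ∈ Finset.univ.erase a, w k) * (y - (∏ k, w k) * x) := by
  unfold pderivAt wLoss
  simp only [prod_update_aux _ w a _ (Finset.mem_univ a)]
  rw [← Finset.mul_prod_erase Finset.univ w (Finset.mem_univ a)]
  set P := ∏ k ∈ Finset.univ.erase a, w k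
  have h1 : HasDerivAt (fun t : ℝ => y - t * P * x) (-(1 * P * x)) (w a) :=
    (((hasDerivAt_id (w a)).mul_const P).mul_const x).const_sub y
  have h2 := (h1.pow 2).const_mul (1 / 2 : ℝ)
  refine h2.deriv.trans ?_
  simp
  ring

lemma wHess_diag {n : ℕ} (x y : ℝ) (a : Fin n) (w : Fin n → ℝ) :
    wHess n x y w a a = (x * ∏ k ∈ Finset.univ.erase a, w k) ^ 2 := by
  have hf : pderivAt a (wLoss n x y) = fun w => -(x * ∏ k ∈ Finset.univ.erase a, w k) *
      (y - (∏ k, w k) * x) := funext fun w => pderiv_wLoss x y a w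
  simp only [wHess, Matrix.of_apply]
  rw [hf]
  unfold pderivAt
  have hc : ∀ t : ℝ, ∏ k ∈ Finset.univ.erase a, Function.update w a t k
      = ∏ k ∈ Finset.univ.erase a, w k := fun t =>
    Finset.prod_congr rfl fun k hk => by
      rw [Function.update_of_ne (Finset.ne_of_mem_erase hk)]
  simp only [hc, prod_update_aux _ w a _ (Finset.mem_univ a)]
  set P := ∏ k ∈ Finset.univ.erase a, w k
  have h1 : HasDerivAt (fun t : ℝ => y - t * P * x) (-(1 * P * x)) (w a) :=
    (((hasDerivAt_id (w a)).mul_const P).mul_const x).const_sub y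
  refine (h1.const_mul (-(x * P))).deriv.trans ?_
  ring

lemma wHess_off {n : ℕ} (x y : ℝ) (a b : Fin n) (hab : a ≠ b) (w : Fin n → ℝ) :
    wHess n x y w a b = -(x * y) * (∏ k ∈ (Finset.univ.erase a).erase b, w k)
      + 2 * w a * w b * (x * ∏ k ∈ (Finset.univ.erase a).erase b, w k) ^ 2 := by
  have hf : pderivAt a (wLoss n x y) = fun w => -(x * ∏ k ∈ Finset.univ.erase a, w k) *
      (y - (w a * ∏ k ∈ Finset.univ.erase a, w k) * x) := funext fun w => by
    rw [pderiv_wLoss x y a w, Finset.mul_prod_erase Finset.univ w (Finset.mem_univ a)]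
  simp only [wHess, Matrix.of_apply]
  rw [hf]
  unfold pderivAt
  have hb : b ∈ Finset.univ.erase a := Finset.mem_erase.2 ⟨hab.symm, Finset.mem_univ b⟩
  simp only [prod_update_aux _ w b _ hb, Function.update_of_ne hab]
  set Q := ∏ k ∈ (Finset.univ.erase a).erase b, w k
  have h0 : HasDerivAt (fun t : ℝ => t * Q) (1 * Q) (w b) := (hasDerivAt_id (w b)).mul_const Q
  have h1 := ((h0.const_mul (w a)).mul_const x).const_sub y
  have h2 := (h0.const_mul x).neg
  refine (h2.mul h1).deriv.trans ?_
  simp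
  ring

lemma charpoly_aux {n : ℕ} (hn : 2 ≤ n) (M : Matrix (Fin n) (Fin n) ℝ) (i j : Fin n)
    (hij : i ≠ j) (c : ℝ)
    (h0 : ∀ a b : Fin n, ¬(a = i ∧ b = j) → ¬(a = j ∧ b = i) → M a b = 0)
    (h1 : M i j = c) (h2 : M j i = c) :
    M.charpoly = Polynomial.X ^ (n - 2) * (Polynomial.X ^ 2 - Polynomial.C (c ^ 2)) := by
  let U : Matrix (Fin n) (Fin 2) ℝ := Matrix.of fun a s => if a = ![i, j] s then 1 else 0
  let V : Matrix (Fin 2) (Fin n) ℝ := Matrix.of fun s b => if b = ![j, i] s then c else 0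
  have hM : M = U * V := by
    ext a b
    simp only [Matrix.mul_apply, Fin.sum_univ_two, U, V, Matrix.of_apply, Matrix.cons_val_zero,
      Matrix.cons_val_one]
    have := h0 a b
    by_cases hai : a = i <;> by_cases haj : a = j <;> by_cases hbi : b = i <;>
      by_cases hbj : b = j <;> simp_all
  have hVU : V * U = !![0, c; c, 0] := by
    ext s t
    fin_cases s <;> fin_cases t <;>
      simp [Matrix.mul_apply, U, V, hij.symm]
    refine Finset.sum_eq_zero fun k _ => ?_
    by_cases hk : k = j
    · have hki : k ≠ i := fun h => hij (h.symm.trans hk)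
      simp [hki]
    · simp [hk]
  have h := Matrix.charpoly_mul_comm' U V
  rw [← hM, hVU] at h
  have hc : (!![0, c; c, 0] : Matrix (Fin 2) (Fin 2) ℝ).charpoly
      = Polynomial.X ^ 2 - Polynomial.C (c ^ 2) := by
    rw [Matrix.charpoly_fin_two]
    simp [Matrix.trace_fin_two, Matrix.det_fin_two]
    ring
  rw [hc] at h
  simp only [Fintype.card_fin] at h
  have hx : (Polynomial.X : Polynomial ℝ) ^ 2 ≠ 0 := pow_ne_zero _ Polynomial.X_ne_zero
  apply mul_left_cancel₀ hx
  rw [h, ← mul_assoc, ← pow_add]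
  congr 2
  omega

theorem width_one_hessian_on_saddle_component
    (n : ℕ) (hn : 2 ≤ n) (x y : ℝ) (w : Fin n → ℝ) (i j : Fin n) (hij : i ≠ j)
    (hwi : w i = 0) (hwj : w j = 0) :
    (∀ a b : Fin n, ¬(a = i ∧ b = j) → ¬(a = j ∧ b = i) → wHess n x y w a b = 0) ∧
    wHess n x y w i j = -(x * y) * ∏ k ∈ (Finset.univ.erase i).erase j, w k ∧
    wHess n x y w j i = -(x * y) * ∏ k ∈ (Finset.univ.erase i).erase j, w k ∧
    (wHess n x y w).charpoly
      = Polynomial.X ^ (n - 2)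
        * (Polynomial.X ^ 2
            - Polynomial.C ((-(x * y) * ∏ k ∈ (Finset.univ.erase i).erase j, w k) ^ 2)) := by
  have H0 : ∀ a b : Fin n, ¬(a = i ∧ b = j) → ¬(a = j ∧ b = i) → wHess n x y w a b = 0 := by
    intro a b hab hba
    by_cases h : a = b
    · subst h
      rw [wHess_diag]
      have : ∏ k ∈ Finset.univ.erase a, w k = 0 := by
        by_cases hai : i = a
        · exact Finset.prod_eq_zero (i := j) (by simp; grind) hwj
        · exact Finset.prod_eq_zero (i := i) (by simp; grind) hwi
      simp [this]
    · rw [wHess_off x y a b h]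
      have : ∏ k ∈ (Finset.univ.erase a).erase b, w k = 0 := by
        by_cases hai : i = a ∨ i = b
        · exact Finset.prod_eq_zero (i := j) (by simp; grind) hwj
        · exact Finset.prod_eq_zero (i := i) (by simp; grind) hwi
      simp [this]
  have H1 : wHess n x y w i j = -(x * y) * ∏ k ∈ (Finset.univ.erase i).erase j, w k := by
    rw [wHess_off x y i j hij]
    simp [hwi]
  have H2 : wHess n x y w j i = -(x * y) * ∏ k ∈ (Finset.univ.erase i).erase j, w k := by
    rw [wHess_off x y j i hij.symm, Finset.erase_right_comm]
    simp [hwi]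
  exact ⟨H0, H1, H2, charpoly_aux hn _ i j hij _ H0 H1 H2⟩
end

section
/- Let i ≠ j and suppose w_i = 0, w_j = 0, x ≠ 0, y ≠ 0, and w_k ≠ 0 for every k ∉ {i, j}. Then w is a critical point of l (∇l(w) = 0) whose Hessian has a strictly negative eigenvalue and a strictly positive eigenvalue; in particular w is a strict saddle point: it is neither a local minimum nor a local maximum of l. -/
open Finset in
lemma aux_prod_update {n : ℕ} (w : Fin n → ℝ) (a : Fin n) (t : ℝ) :
    ∏ k, Function.update w a t k = t * ∏ k ∈ univ.erase a, w k := by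
  rw [← mul_prod_erase univ _ (mem_univ a), Function.update_self]
  congr 1
  refine prod_congr rfl fun k hk => ?_
  rw [Function.update_of_ne (ne_of_mem_erase hk)]

open Finset in
lemma aux_pderiv (n : ℕ) (x y : ℝ) (a : Fin n) (u : Fin n → ℝ) :
    pderivAt a (wLoss n x y) u
      = -(y - (∏ k, u k) * x) * x * ∏ k ∈ univ.erase a, u k := by
  unfold pderivAt wLoss
  simp only [aux_prod_update]
  rw [← mul_prod_erase univ u (mem_univ a)]
  generalize ∏ k ∈ univ.erase a, u k = c
  have h : HasDerivAt (fun t : ℝ => (1 / 2) * (y - t * c * x) ^ 2)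
      ((1 / 2) * (2 * (y - u a * c * x) ^ 1 * (-(1 * c * x)))) (u a) := by
    have := (((((hasDerivAt_id (u a)).mul_const c).mul_const x).const_sub y).pow 2).const_mul
      (1 / 2 : ℝ)
    simpa using this
  rw [h.deriv]; ring

open Finset in
lemma aux_hess (n : ℕ) (x y : ℝ) (w : Fin n → ℝ) (i j : Fin n) (hij : i ≠ j)
    (hwi : w i = 0) (hwj : w j = 0) (a b : Fin n) :
    wHess n x y w a b = if (a = i ∧ b = j) ∨ (a = j ∧ b = i) then
      -(y * x * ∏ k ∈ (univ.erase i).erase j, w k) else 0 := by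
  have hz : ∀ t, ∏ k, Function.update w b t k = 0 := by
    intro t
    by_cases hb : b = i
    · exact prod_eq_zero (mem_univ j) (by rw [Function.update_of_ne (by grind), hwj])
    · exact prod_eq_zero (mem_univ i) (by rw [Function.update_of_ne (by grind), hwi])
  have hH : wHess n x y w a b =
      deriv (fun t => -(y * x) * ∏ k ∈ univ.erase a, Function.update w b t k) (w b) := by
    simp only [wHess, Matrix.of_apply]
    rw [pderivAt]
    congr 1
    funext t
    rw [aux_pderiv, hz]; ring
  have key : ∀ p q : Fin n, p ≠ q → ∀ t : ℝ, ∏ k ∈ univ.erase p, Function.update w q t k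
      = t * ∏ k ∈ (univ.erase p).erase q, w k := by
    intro p q hpq t
    rw [← mul_prod_erase (univ.erase p) _ (mem_erase.2 ⟨hpq.symm, mem_univ q⟩),
      Function.update_self]
    congr 1
    refine prod_congr rfl fun k hk => ?_
    rw [Function.update_of_ne (ne_of_mem_erase hk)]
  have hd : ∀ c s : ℝ, deriv (fun t : ℝ => -(y * x) * (t * c)) s = -(y * x * c) := by
    intro c s
    have := (((hasDerivAt_id s).mul_const c).const_mul (-(y * x))).deriv
    simp only [id] at this
    rw [this]; ring
  rw [hH]
  split_ifs with h
  · rcases h with ⟨rfl, rfl⟩ | ⟨rfl, rfl⟩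
    · simp only [key _ _ hij, hd]
    · simp only [key _ _ hij.symm, hd]
      rw [erase_right_comm]
  · have : ∀ t, ∏ k ∈ univ.erase a, Function.update w b t k = 0 := by
      intro t
      by_cases hi : a ≠ i ∧ b ≠ i
      · exact prod_eq_zero (mem_erase.2 ⟨hi.1.symm, mem_univ i⟩)
          (by rw [Function.update_of_ne hi.2.symm, hwi])
      · have hj : a ≠ j ∧ b ≠ j := by grind
        exact prod_eq_zero (mem_erase.2 ⟨hj.1.symm, mem_univ j⟩)
          (by rw [Function.update_of_ne hj.2.symm, hwj])
    simp [this]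

open Finset in
lemma aux_loss (n : ℕ) (x y : ℝ) (w : Fin n → ℝ) (i j : Fin n) (hij : i ≠ j) (a b : ℝ) :
    wLoss n x y (Function.update (Function.update w i a) j b)
      = (1 / 2) * (y - a * b * (∏ k ∈ (univ.erase i).erase j, w k) * x) ^ 2 := by
  unfold wLoss
  rw [aux_prod_update, ← mul_prod_erase (univ.erase j) _ (mem_erase.2 ⟨hij, mem_univ i⟩),
    Function.update_self, erase_right_comm]
  have : ∏ k ∈ (univ.erase i).erase j, Function.update w i a k
      = ∏ k ∈ (univ.erase i).erase j, w k := by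
    refine prod_congr rfl fun k hk => ?_
    rw [Function.update_of_ne (ne_of_mem_erase (mem_of_mem_erase hk))]
  rw [this]; ring

open Finset in
lemma aux_eig (n : ℕ) (x y : ℝ) (w : Fin n → ℝ) (i j : Fin n) (hij : i ≠ j)
    (hwi : w i = 0) (hwj : w j = 0) (s : ℝ) (hs : s * s = 1) :
    ∃ v : Fin n → ℝ, v ≠ 0 ∧ (wHess n x y w).mulVec v =
      (-(y * x * ∏ k ∈ (univ.erase i).erase j, w k) * s) • v := by
  refine ⟨Pi.single i 1 + Pi.single j s, ?_, ?_⟩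
  · intro h
    have := congrFun h i
    simp [hij] at this
  · rw [Matrix.mulVec_add]
    ext a
    simp only [Matrix.mulVec_single, Pi.add_apply, Pi.smul_apply, Matrix.col_apply,
      aux_hess n x y w i j hij hwi hwj, smul_eq_mul, MulOpposite.smul_eq_mul_unop,
      MulOpposite.unop_op]
    generalize -(y * x * ∏ k ∈ (univ.erase i).erase j, w k) = c
    by_cases hai : a = i
    · subst hai; simp [hij]
    · by_cases haj : a = j
      · subst haj; simp [hij, hai]; linear_combination (-c) * hs
      · simp [hai, haj]

theorem width_one_strict_saddle
    (n : ℕ) (hn : 2 ≤ n) (x y : ℝ) (hx : x ≠ 0) (hy : y ≠ 0)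
    (w : Fin n → ℝ) (i j : Fin n) (hij : i ≠ j)
    (hwi : w i = 0) (hwj : w j = 0) (hw : ∀ k, k ≠ i → k ≠ j → w k ≠ 0) :
    fderiv ℝ (wLoss n x y) w = 0 ∧
    (∃ μ : ℝ, μ < 0 ∧ ∃ v : Fin n → ℝ, v ≠ 0 ∧ (wHess n x y w).mulVec v = μ • v) ∧
    (∃ μ : ℝ, 0 < μ ∧ ∃ v : Fin n → ℝ, v ≠ 0 ∧ (wHess n x y w).mulVec v = μ • v) ∧
    ¬ IsLocalMin (wLoss n x y) w ∧ ¬ IsLocalMax (wLoss n x y) w := by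
  classical
  have hP : ∏ k ∈ (Finset.univ.erase i).erase j, w k ≠ 0 := by
    refine Finset.prod_ne_zero_iff.2 fun k hk => hw k ?_ ?_ <;> grind
  have hL := aux_loss n x y w i j hij
  have hE := aux_eig n x y w i j hij hwi hwj
  set P := ∏ k ∈ (Finset.univ.erase i).erase j, w k with hPdef
  have hw0 : wLoss n x y w = (1 / 2) * y ^ 2 := by
    unfold wLoss
    rw [Finset.prod_eq_zero (Finset.mem_univ i) hwi]; ring
  have hcurve : ∀ s : ℝ, Filter.Tendsto
      (fun t : ℝ => Function.update (Function.update w i t) j (s * t))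
      (nhdsWithin 0 {0}ᶜ) (nhds w) := by
    intro s
    have hc : Continuous (fun t : ℝ => Function.update (Function.update w i t) j (s * t)) := by
      have h1 : Continuous (fun t : ℝ => s * t) := by fun_prop
      have h2 : Continuous (fun t : ℝ => Function.update w i t) :=
        continuous_const.update i continuous_id
      exact h2.update j h1
    have h0 := hc.tendsto 0
    have e : Function.update (Function.update w i (0 : ℝ)) j (s * 0) = w := by
      rw [← hwi, Function.update_eq_self, hwi, mul_zero, ← hwj, Function.update_eq_self]
    rw [e] at h0
    exact h0.mono_left nhdsWithin_le_nhds
  have hD : P * x * y ≠ 0 := mul_ne_zero (mul_ne_zero hP hx) hy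
  have hc : -(y * x * P) ≠ 0 := by
    intro h; apply hD; linear_combination -h
  refine ⟨?_, ?_, ?_, ?_, ?_⟩
  · have hp : HasFDerivAt (fun u : Fin n → ℝ => ∏ k, u k) (0 : (Fin n → ℝ) →L[ℝ] ℝ) w := by
      have h := hasFDerivAt_finsetProd (𝕜 := ℝ) (u := (Finset.univ : Finset (Fin n))) (x := w)
      refine h.congr_fderiv ?_
      refine Finset.sum_eq_zero fun k _ => ?_
      have : ∏ l ∈ Finset.univ.erase k, w l = 0 := by
        by_cases hk : k = i
        · exact Finset.prod_eq_zero (Finset.mem_erase.2 ⟨by grind, Finset.mem_univ j⟩) hwj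
        · exact Finset.prod_eq_zero (Finset.mem_erase.2 ⟨by grind, Finset.mem_univ i⟩) hwi
      rw [this, zero_smul]
    have h := (((hp.mul_const x).const_sub y).pow 2).const_mul (1 / 2 : ℝ)
    have h2 := h.fderiv
    simp only [smul_zero, neg_zero] at h2
    exact h2
  · rcases lt_or_gt_of_ne hc with h | h
    · exact ⟨_, by linarith, hE 1 (by norm_num)⟩
    · exact ⟨_, by linarith, hE (-1) (by norm_num)⟩
  · rcases lt_or_gt_of_ne hc with h | h
    · exact ⟨_, by linarith, hE (-1) (by norm_num)⟩
    · exact ⟨_, by linarith, hE 1 (by norm_num)⟩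
  · intro hmin
    have h1 := (hcurve (P * x * y)).eventually hmin
    have h2 : ∀ᶠ t : ℝ in nhdsWithin 0 {0}ᶜ, t ^ 2 * (P * x) ^ 2 < 2 := by
      have : Continuous (fun t : ℝ => t ^ 2 * (P * x) ^ 2) := by fun_prop
      have h := this.tendsto 0
      refine (h.mono_left nhdsWithin_le_nhds).eventually (gt_mem_nhds ?_)
      norm_num
    obtain ⟨t, ⟨h1, h2⟩, h3⟩ := ((h1.and h2).and self_mem_nhdsWithin).exists
    have h3 : t ≠ 0 := h3
    rw [hL, hw0] at h1
    have h4 : 0 < t ^ 2 * (P * x * y) ^ 2 := by positivity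
    nlinarith [mul_pos h4 (sub_pos.2 h2)]
  · intro hmax
    have h1 := (hcurve (-(P * x * y))).eventually hmax
    obtain ⟨t, h1, h3⟩ := (h1.and self_mem_nhdsWithin).exists
    have h3 : t ≠ 0 := h3
    rw [hL, hw0] at h1
    have h4 : 0 < t ^ 2 * (P * x * y) ^ 2 := by positivity
    have h5 : 0 ≤ (t ^ 2 * (P * x * y) * (P * x)) ^ 2 := sq_nonneg _
    nlinarith
end
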